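/- Let λ, t₁, t₂ ∈ ℝ with λ ≠ t₁, λ ≠ −t₂ and t₁ + t₂ ≠ 0. Then lim_{r→0⁺} b(r) · e^{πi b(r)² λ(λ − 2 t₁)} · G_{b(r)}(i b(r)(λ − t₁)) · G_{b(r)}(−i b(r)(λ + t₂)) / G_{b(r)}(−i b(r)(t₁ + t₂)) = (1/2π) · Γ(i(λ − t₁)) Γ(−i(λ + t₂)) / Γ(−i(t₁ + t₂)). (This is the classical limit of the rescaled quantum intertwining kernel b²·𝓕⌊bλ, bt; bt₁, bt₂⌋_* towards the classical ax+b intertwining kernel (1/2π) δ(t₁+t₂−t) Γ(iλ−it₁)Γ(−it₂−iλ)/Γ(−it), with the delta factor removed.) -/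

import Mathlib

open Complex Filter Topology

/-- ζ̄_b = exp(−πi/4 − (πi/12)(b² + b^{−2})). -/
noncomputable def zetaBar (b : ℂ) : ℂ :=
  Complex.exp (-(Real.pi * Complex.I) / 4 - (Real.pi * Complex.I) / 12 * (b ^ 2 + b⁻¹ ^ 2))

/-- The quantum dilogarithm `G_b(x)`, defined for `Im(b²) > 0` by the infinite product
`ζ̄_b · ∏_{n=1}^∞ (1 − e^{2πi b⁻¹(x − n b⁻¹)}) / ∏_{n=0}^∞ (1 − e^{2πi b(x + n b)})`. -/
noncomputable def Gb (b x : ℂ) : ℂ :=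
  zetaBar b *
      (∏' n : ℕ, (1 - Complex.exp (2 * Real.pi * Complex.I * b⁻¹ * (x - (n + 1) * b⁻¹)))) /
    (∏' n : ℕ, (1 - Complex.exp (2 * Real.pi * Complex.I * b * (x + n * b))))

/-- `b(r) = e^{iπ/4} √r`, so that `b(r)² = i r`. -/
noncomputable def br (r : ℝ) : ℂ :=
  Complex.exp (Real.pi * Complex.I / 4) * (Real.sqrt r : ℂ)

/-- The `q`-Pochhammer symbol `(a; q)_∞`. -/
noncomputable def qPochhammer (a q : ℂ) : ℂ :=
  ∏' n : ℕ, (1 - a * q ^ n)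

lemma summable_norm_neg_mul_pow (a : ℂ) {q : ℂ} (hq : ‖q‖ < 1) :
    Summable fun n : ℕ => ‖-(a * q ^ n)‖ := by
  simpa using (summable_geometric_of_lt_one (norm_nonneg q) hq).mul_left ‖a‖

lemma multipliable_one_sub_mul_pow (a : ℂ) {q : ℂ} (hq : ‖q‖ < 1) :
    Multipliable fun n : ℕ => 1 - a * q ^ n := by
  simpa [sub_eq_add_neg] using multipliable_one_add_of_summable (summable_norm_neg_mul_pow a hq)

lemma qPochhammer_ne_zero {a q : ℂ} (hq : ‖q‖ < 1) (ha : ∀ n : ℕ, 1 - a * q ^ n ≠ 0) :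
    qPochhammer a q ≠ 0 := by
  simpa [qPochhammer, sub_eq_add_neg] using tprod_one_add_ne_zero_of_summable
    (by simpa [sub_eq_add_neg] using ha) (summable_norm_neg_mul_pow a hq)

lemma qPochhammer_eq_one_sub_mul (a : ℂ) {q : ℂ} (hq : ‖q‖ < 1) :
    qPochhammer a q = (1 - a) * qPochhammer (a * q) q := by
  have h : Multipliable fun n : ℕ => 1 - a * q ^ (n + 1) := by
    simpa only [pow_succ', mul_assoc] using multipliable_one_sub_mul_pow (a * q) hq
  calc qPochhammer a q = (1 - a * q ^ 0) * ∏' n : ℕ, (1 - a * q ^ (n + 1)) :=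
        tprod_eq_zero_mul' (f := fun n : ℕ => 1 - a * q ^ n) h
    _ = (1 - a) * qPochhammer (a * q) q := by
        simp only [qPochhammer, pow_zero, mul_one, pow_succ', mul_assoc]

/-- The infinite product form of the `q`-Beta function. -/
lemma qPochhammer_beta_eq_tprod {a b q : ℂ} (hq : ‖q‖ < 1)
    (ha : ∀ n : ℕ, 1 - a * q ^ (n + 1) ≠ 0) (hb : ∀ n : ℕ, 1 - b * q ^ (n + 1) ≠ 0) :
    qPochhammer q q * qPochhammer (a * b * q) q /
        (qPochhammer (a * q) q * qPochhammer (b * q) q) =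
      ∏' n : ℕ, (1 + -(q ^ (n + 1) * (1 - a) * (1 - b) /
        ((1 - a * q ^ (n + 1)) * (1 - b * q ^ (n + 1))))) := by
  have hne (c : ℂ) (hc : ∀ n : ℕ, 1 - c * q ^ (n + 1) ≠ 0) : qPochhammer (c * q) q ≠ 0 :=
    qPochhammer_ne_zero hq (by simpa [pow_succ', mul_assoc] using hc)
  have hp (c : ℂ) : HasProd (fun n : ℕ => 1 - c * q ^ n) (qPochhammer c q) :=
    (multipliable_one_sub_mul_pow c hq).hasProd
  rw [← (((hp q).mul (hp (a * b * q))).div₀ ((hp (a * q)).mul (hp (b * q)))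
    (mul_ne_zero (hne a ha) (hne b hb))).tprod_eq]
  refine tprod_congr fun n => ?_
  have h1 := ha n
  have h2 := hb n
  have e (c : ℂ) : c * q * q ^ n = c * q ^ (n + 1) := by ring
  rw [e, e, e, ← pow_succ', ← sub_eq_add_neg, one_sub_div (mul_ne_zero h1 h2)]
  ring

lemma tendsto_qPochhammer_mul_self (c : ℂ) :
    Tendsto (fun q : ℂ => qPochhammer (c * q) q) (𝓝 0) (𝓝 1) := by
  have h := tendsto_tprod_one_add_of_dominated_convergence (𝓕 := 𝓝 (0 : ℂ)) (g := 0)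
    (f := fun (q : ℂ) (n : ℕ) => -(c * q ^ (n + 1)))
    (bound := fun n => ‖c‖ * (1 / 2 : ℝ) ^ (n + 1)) ?_ ?_ ?_
  · simpa [qPochhammer, sub_eq_add_neg, pow_succ', mul_assoc] using h
  · simpa only [pow_succ'] using
      ((summable_geometric_of_abs_lt_one (by norm_num)).mul_left _).mul_left _
  · intro k
    simpa using ((continuous_const.mul (continuous_pow (M := ℂ) (k + 1))).tendsto 0).neg
  · filter_upwards [Metric.ball_mem_nhds (0 : ℂ) (by norm_num : (0 : ℝ) < 1 / 2)] with q hq k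
    rw [norm_neg, norm_mul, norm_pow]
    gcongr
    exact (mem_ball_zero_iff.mp hq).le

/-- `t / (1 - t) ^ 2 ≤ 1 / (log t) ^ 2` for `t = e ^ (-x)`, with denominators cleared. -/
lemma sq_mul_exp_neg_le_one_sub_exp_neg_sq {x : ℝ} (hx : 0 ≤ x) :
    x ^ 2 * Real.exp (-x) ≤ (1 - Real.exp (-x)) ^ 2 := by
  have h : x / 2 ≤ Real.sinh (x / 2) := Real.self_le_sinh_iff.2 (by positivity)
  have e1 : Real.exp (-x) = Real.exp (-(x / 2)) ^ 2 := by
    rw [← Real.exp_nat_mul]; congr 1; push_cast; ring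
  have e2 : 1 - Real.exp (-x) = Real.exp (-(x / 2)) * (2 * Real.sinh (x / 2)) := by
    rw [Real.sinh_eq, e1, show (1 : ℝ) = Real.exp (-(x / 2)) * Real.exp (x / 2) by
      rw [← Real.exp_add]; simp]
    ring
  rw [e2, e1, mul_pow, mul_comm]
  gcongr
  linarith

lemma one_sub_norm_le_norm_one_sub_mul {a : ℂ} (ha : ‖a‖ = 1) (w : ℂ) :
    1 - ‖w‖ ≤ ‖1 - a * w‖ := by
  simpa [ha] using norm_sub_norm_le (1 : ℂ) (a * w)

lemma norm_one_sub_exp_mul_I_le (x : ℝ) : ‖1 - Complex.exp (x * I)‖ ≤ |x| := by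
  rw [norm_sub_rev, mul_comm]
  simpa using Real.norm_exp_I_mul_ofReal_sub_one_le (x := x)


lemma natCast_succ_le_norm_add {z : ℂ} (hz : 0 ≤ z.re) (n : ℕ) :
    (n + 1 : ℝ) ≤ ‖(n + 1 : ℂ) + z‖ := by
  refine le_trans ?_ (Complex.re_le_norm _)
  simpa using hz

lemma summable_const_div_succ_sq (c : ℝ) : Summable fun n : ℕ => c / (n + 1 : ℝ) ^ 2 := by
  have h := (summable_nat_add_iff 1).2 (Real.summable_one_div_nat_pow.2 one_lt_two)
  simpa [div_eq_mul_inv] using h.mul_left c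

/-- The Beta function as an infinite product. -/
lemma tprod_eq_beta {z w : ℂ} (hz : 0 ≤ z.re) (hw : 0 ≤ w.re) (hz0 : z ≠ 0) (hw0 : w ≠ 0)
    (hzw0 : z + w ≠ 0) :
    (z + w) / (z * w) * ∏' n : ℕ, (1 + -(z * w / ((n + 1 + z) * (n + 1 + w)))) =
      Complex.Gamma z * Complex.Gamma w / Complex.Gamma (z + w) := by
  have hne {v : ℂ} (hv : 0 ≤ v.re) (n : ℕ) : (n + 1 : ℂ) + v ≠ 0 :=
    norm_pos_iff.1 (lt_of_lt_of_le (by positivity) (natCast_succ_le_norm_add hv n))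
  have hzw : 0 ≤ (z + w).re := by simpa using add_nonneg hz hw
  have hG : Complex.Gamma (z + w) ≠ 0 := by
    refine Complex.Gamma_ne_zero fun n h => ?_
    rcases n with _ | n
    · exact hzw0 (by simpa using h)
    · exact hne hzw n (by rw [h]; push_cast; ring)
  have hm : Multipliable fun n : ℕ => 1 + -(z * w / ((n + 1 + z) * (n + 1 + w))) := by
    refine multipliable_one_add_of_summable
      ((summable_const_div_succ_sq ‖z * w‖).of_nonneg_of_le (fun _ => norm_nonneg _) fun n => ?_)
    rw [norm_neg, norm_div, norm_mul (_ + z), sq]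
    gcongr
    · exact natCast_succ_le_norm_add hz n
    · exact natCast_succ_le_norm_add hw n
  refine tendsto_nhds_unique (hm.hasProd.tendsto_prod_nat.const_mul _)
    ((((GammaSeq_tendsto_Gamma z).mul (GammaSeq_tendsto_Gamma w)).div
      (GammaSeq_tendsto_Gamma (z + w)) hG).congr' ?_)
  filter_upwards [eventually_ne_atTop 0] with n hn
  have hn' : (n : ℂ) ≠ 0 := Nat.cast_ne_zero.2 hn
  have hseq (v : ℂ) : GammaSeq v n =
      (n : ℂ) ^ v * (∏ j ∈ Finset.range n, (j + 1 : ℂ)) /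
        ((∏ j ∈ Finset.range n, ((j + 1 : ℂ) + v)) * v) := by
    rw [GammaSeq, Finset.prod_range_succ', ← Finset.prod_range_add_one_eq_factorial]
    push_cast
    simp only [add_comm v, zero_add]
  have hterm (j : ℕ) : 1 + -(z * w / ((j + 1 + z) * (j + 1 + w))) =
      (j + 1 : ℂ) * (j + 1 + (z + w)) / ((j + 1 + z) * (j + 1 + w)) := by
    have h1 := hne hz j
    have h2 := hne hw j
    field_simp
    ring
  have hprod {v : ℂ} (hv : 0 ≤ v.re) : ∏ j ∈ Finset.range n, ((j + 1 : ℂ) + v) ≠ 0 :=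
    Finset.prod_ne_zero_iff.2 fun j _ => hne hv j
  have hfac : ∏ j ∈ Finset.range n, (j + 1 : ℂ) ≠ 0 := by
    simpa using hprod (v := 0) le_rfl
  have h1 := hprod hz
  have h2 := hprod hw
  have h3 := hprod hzw
  simp only [Pi.div_apply, hseq, hterm, Finset.prod_div_distrib, Finset.prod_mul_distrib]
  rw [cpow_add _ _ hn']
  have h4 : (n : ℂ) ^ z ≠ 0 := by simp [cpow_eq_zero_iff, hn']
  have h5 : (n : ℂ) ^ w ≠ 0 := by simp [cpow_eq_zero_iff, hn']
  field_simp

lemma tendsto_one_sub_exp_neg_mul_div (c : ℂ) :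
    Tendsto (fun x : ℝ => (1 - Complex.exp (-(x * c))) / x) (𝓝[>] 0) (𝓝 c) := by
  have h : HasDerivAt (fun x : ℝ => 1 - Complex.exp (-(x * c))) c 0 := by
    have h0 : HasDerivAt (fun x : ℝ => -((x : ℂ) * c)) (-(1 * c)) 0 :=
      ((Complex.ofRealCLM.hasDerivAt (x := 0)).mul_const c).neg
    simpa using h0.cexp.const_sub 1
  have h' := (hasDerivAt_iff_tendsto_slope.1 h).mono_left
    (nhdsWithin_mono _ fun x (hx : 0 < x) => hx.ne')
  refine h'.congr fun x => ?_
  simp [slope, div_eq_inv_mul]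

lemma exp_mul_exp_neg_pow (x : ℝ) (c : ℂ) (n : ℕ) :
    Complex.exp (-(x * c)) * Complex.exp (-x) ^ n = Complex.exp (-(x * (c + n))) := by
  rw [← Complex.exp_nat_mul, ← Complex.exp_add]
  ring_nf

lemma norm_exp_neg_mul_of_re_eq_zero (x : ℝ) {c : ℂ} (hc : c.re = 0) :
    ‖Complex.exp (-(x * c))‖ = 1 := by
  simp [Complex.norm_exp, hc]

lemma norm_exp_neg_ofReal (x : ℝ) : ‖Complex.exp (-(x : ℂ))‖ = Real.exp (-x) := by
  simp [Complex.norm_exp]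

lemma one_sub_exp_mul_pow_ne_zero {x : ℝ} (hx : 0 < x) {c : ℂ} (hc : c.re = 0) (n : ℕ) :
    1 - Complex.exp (-(x * c)) * Complex.exp (-x) ^ (n + 1) ≠ 0 := by
  have h := one_sub_norm_le_norm_one_sub_mul (norm_exp_neg_mul_of_re_eq_zero x hc)
    (Complex.exp (-x) ^ (n + 1))
  rw [norm_pow, norm_exp_neg_ofReal] at h
  have := pow_lt_one₀ (Real.exp_pos (-x)).le (Real.exp_lt_one_iff.2 (by linarith))
    (Nat.add_one_ne_zero n)
  exact norm_pos_iff.1 (by linarith)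

/-- The infinite product of the `q`-Beta function tends to that of the Beta function as
`q → 1⁻`, at points of the imaginary axis. -/
lemma tendsto_tprod_qBeta {z w : ℂ} (hz : z.re = 0) (hw : w.re = 0) :
    Tendsto (fun x : ℝ => ∏' n : ℕ, (1 + -(Complex.exp (-x) ^ (n + 1) *
        (1 - Complex.exp (-(x * z))) * (1 - Complex.exp (-(x * w))) /
        ((1 - Complex.exp (-(x * z)) * Complex.exp (-x) ^ (n + 1)) *
          (1 - Complex.exp (-(x * w)) * Complex.exp (-x) ^ (n + 1)))))) (𝓝[>] 0)
      (𝓝 (∏' n : ℕ, (1 + -(z * w / ((n + 1 + z) * (n + 1 + w)))))) := by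
  have hne {v : ℂ} (hv : v.re = 0) (n : ℕ) : v + (n + 1 : ℕ) ≠ 0 := fun h => by
    have := congrArg Complex.re h
    simp only [add_re, hv, natCast_re, zero_re] at this
    norm_cast at this
  have hsub {v : ℂ} (hv : v.re = 0) (x : ℝ) : ‖1 - Complex.exp (-(x * v))‖ ≤ |x| * ‖v‖ := by
    have hvI : v = v.im * I := by apply Complex.ext <;> simp [hv]
    have h := norm_one_sub_exp_mul_I_le (-(x * v.im))
    rw [abs_neg, abs_mul, ← Complex.abs_im_eq_norm.2 hv] at *
    convert h using 4
    conv_lhs => rw [hvI]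
    push_cast
    ring
  refine tendsto_tprod_one_add_of_dominated_convergence
    (summable_const_div_succ_sq (‖z‖ * ‖w‖)) (fun n => ?_) ?_
  · have hx : Tendsto (fun x : ℝ => Complex.exp (-x) ^ (n + 1)) (𝓝[>] 0) (𝓝 1) := by
      have : ContinuousAt (fun x : ℝ => Complex.exp (-x) ^ (n + 1)) 0 := by fun_prop
      simpa using this.tendsto.mono_left nhdsWithin_le_nhds
    have hlim := ((hx.mul (tendsto_one_sub_exp_neg_mul_div z)).mul
      (tendsto_one_sub_exp_neg_mul_div w)).div
      ((tendsto_one_sub_exp_neg_mul_div (z + (n + 1 : ℕ))).mul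
        (tendsto_one_sub_exp_neg_mul_div (w + (n + 1 : ℕ))))
      (mul_ne_zero (hne hz n) (hne hw n))
    have e (v : ℂ) : (n + 1 : ℂ) + v = v + (n + 1 : ℕ) := by push_cast; ring
    rw [one_mul, ← e z, ← e w] at hlim
    refine hlim.neg.congr' ?_
    filter_upwards [self_mem_nhdsWithin] with x hx
    have hx0 : (x : ℂ) ≠ 0 := Complex.ofReal_ne_zero.2 (ne_of_gt hx)
    have h1 := one_sub_exp_mul_pow_ne_zero hx hz n
    have h2 := one_sub_exp_mul_pow_ne_zero hx hw n
    simp only [Pi.div_apply, e, ← exp_mul_exp_neg_pow]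
    field_simp
  · filter_upwards [self_mem_nhdsWithin] with x hx n
    have hx' : 0 < x := hx
    set y : ℝ := x * (n + 1) with hy
    have hy0 : 0 < y := by positivity
    have hq : ‖Complex.exp (-(x : ℂ)) ^ (n + 1)‖ = Real.exp (-y) := by
      rw [norm_pow, norm_exp_neg_ofReal, ← Real.exp_nat_mul, hy]
      congr 1
      push_cast
      ring
    have hlow {v : ℂ} (hv : v.re = 0) : 1 - Real.exp (-y) ≤
        ‖1 - Complex.exp (-(x * v)) * Complex.exp (-x) ^ (n + 1)‖ := by
      rw [← hq]
      exact one_sub_norm_le_norm_one_sub_mul (norm_exp_neg_mul_of_re_eq_zero x hv) _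
    have hpos : 0 < 1 - Real.exp (-y) := by
      have := Real.exp_lt_one_iff.2 (neg_lt_zero.2 hy0)
      linarith
    have h1 := hsub hz x
    have h2 := hsub hw x
    rw [abs_of_pos hx'] at h1 h2
    rw [norm_neg, norm_div, norm_mul, norm_mul, norm_mul (1 - _), hq]
    calc _ ≤ Real.exp (-y) * (x * ‖z‖) * (x * ‖w‖) /
          ((1 - Real.exp (-y)) * (1 - Real.exp (-y))) := by
            gcongr
            · exact hlow hz
            · exact hlow hw
      _ ≤ Real.exp (-y) * (x * ‖z‖) * (x * ‖w‖) / (y ^ 2 * Real.exp (-y)) := by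
            rw [← sq (1 - _)]
            gcongr
            exact sq_mul_exp_neg_le_one_sub_exp_neg_sq hy0.le
      _ = ‖z‖ * ‖w‖ / (n + 1 : ℝ) ^ 2 := by
            rw [hy]
            field_simp

lemma br_sq {r : ℝ} (hr : 0 ≤ r) : br r ^ 2 = r * I := by
  have h : Complex.exp (Real.pi * I / 4) ^ 2 = I := by
    rw [← Complex.exp_nat_mul]
    refine Eq.trans ?_ Complex.exp_pi_div_two_mul_I
    congr 1
    push_cast
    ring
  rw [br, mul_pow, h, ← Complex.ofReal_pow, Real.sq_sqrt hr, mul_comm]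

lemma br_ne_zero {r : ℝ} (hr : 0 < r) : br r ≠ 0 :=
  mul_ne_zero (Complex.exp_ne_zero _) (Complex.ofReal_ne_zero.2 (ne_of_gt (Real.sqrt_pos.2 hr)))

/-- The quantum dilogarithm at `z * b(r)` as a quotient of `q`-Pochhammer symbols with mutually
dual nomes. -/
lemma Gb_br_mul {r : ℝ} (hr : 0 < r) (z : ℂ) :
    Gb (br r) (z * br r) = zetaBar (br r) *
      qPochhammer (Complex.exp (2 * Real.pi * I * z) * Complex.exp (-(2 * Real.pi / r : ℝ)))
        (Complex.exp (-(2 * Real.pi / r : ℝ))) /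
      qPochhammer (Complex.exp (-((2 * Real.pi * r : ℝ) * z)))
        (Complex.exp (-(2 * Real.pi * r : ℝ))) := by
  have hb := br_ne_zero hr
  have hr0 : (r : ℂ) ≠ 0 := Complex.ofReal_ne_zero.2 hr.ne'
  rw [Gb, qPochhammer, qPochhammer]
  congr 1
  · congr 1
    refine tprod_congr fun n => ?_
    rw [← Complex.exp_nat_mul, ← Complex.exp_add, ← Complex.exp_add]
    congr 2
    have : 2 * Real.pi * I * (br r)⁻¹ * (z * br r - (n + 1) * (br r)⁻¹) =
        2 * Real.pi * I * z - 2 * Real.pi * I * (n + 1) * (br r ^ 2)⁻¹ := by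
      field_simp
    rw [this, br_sq hr.le]
    push_cast
    have hI := I_ne_zero
    field_simp
    ring
  · refine tprod_congr fun n => ?_
    rw [← Complex.exp_nat_mul, ← Complex.exp_add]
    congr 2
    have : 2 * Real.pi * I * br r * (z * br r + n * br r) =
        2 * Real.pi * I * (z + n) * br r ^ 2 := by ring
    rw [this, br_sq hr.le]
    push_cast
    linear_combination 2 * Real.pi * (z + n) * r * I_sq

lemma eta_ofReal_mul_I (r : ℝ) :
    ModularForm.eta (r * I) = Complex.exp (-(Real.pi * r / 12 : ℝ)) *
      qPochhammer (Complex.exp (-(2 * Real.pi * r : ℝ))) (Complex.exp (-(2 * Real.pi * r : ℝ))) := by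
  rw [ModularForm.eta, qPochhammer, Function.Periodic.qParam]
  congr 1
  · congr 1
    push_cast
    linear_combination Real.pi * r / 12 * I_sq
  · refine tprod_congr fun n => ?_
    rw [ModularForm.eta_q_eq_pow, pow_succ']
    rw [show 2 * Real.pi * I * (r * I) = (-(2 * Real.pi * r : ℝ) : ℂ) by
      push_cast
      linear_combination 2 * Real.pi * r * I_sq]

lemma eta_inv_mul_I {r : ℝ} (hr : 0 < r) :
    ModularForm.eta ((r⁻¹ : ℝ) * I) = Real.sqrt r * ModularForm.eta (r * I) := by
  have h := ModularForm.eta_comp_eq_csqrt_I_inv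
    (show (r * I : ℂ) ∈ UpperHalfPlane.upperHalfPlaneSet by simpa)
  have hr0 : (r : ℂ) ≠ 0 := Complex.ofReal_ne_zero.2 hr.ne'
  have e : -1 / (r * I : ℂ) = (r⁻¹ : ℝ) * I := by
    have hI := I_ne_zero
    push_cast
    field_simp
    simp
  have hs : Complex.sqrt (r * I) = Real.sqrt r * Complex.sqrt I := by
    rw [sqrt_eq_exp (mul_ne_zero hr0 I_ne_zero), sqrt_eq_exp I_ne_zero,
      Complex.log_ofReal_mul hr I_ne_zero, add_div, Complex.exp_add, Real.sqrt_eq_rpow,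
      Real.rpow_def_of_pos hr]
    push_cast
    ring_nf
  have hI : Complex.sqrt I ≠ 0 := by
    rw [sqrt_eq_exp I_ne_zero]
    exact Complex.exp_ne_zero _
  simp only [Function.comp_apply, Pi.smul_apply, Pi.mul_apply, smul_eq_mul, e, hs] at h
  rw [h]
  field_simp

/-- The modular transformation of the Dedekind eta function, in terms of the normalising
constant of the quantum dilogarithm. -/
lemma br_mul_zetaBar {r : ℝ} (hr : 0 < r) :
    br r * zetaBar (br r) *
      qPochhammer (Complex.exp (-(2 * Real.pi / r : ℝ))) (Complex.exp (-(2 * Real.pi / r : ℝ))) =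
      r * qPochhammer (Complex.exp (-(2 * Real.pi * r : ℝ)))
        (Complex.exp (-(2 * Real.pi * r : ℝ))) := by
  have h := eta_inv_mul_I hr
  have hexp : br r * zetaBar (br r) = Real.sqrt r * Complex.exp (Real.pi * r / 12 : ℝ) *
      Complex.exp (-(Real.pi * r⁻¹ / 12 : ℝ)) := by
    rw [zetaBar, br, mul_right_comm, ← Complex.exp_add, mul_comm, mul_assoc, ← Complex.exp_add,
      ← br, inv_pow, br_sq hr.le, mul_inv, inv_I]
    congr 2
    push_cast
    linear_combination (-(Real.pi * r / 12) + Real.pi * (r : ℂ)⁻¹ / 12) * I_sq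
  rw [eta_ofReal_mul_I, eta_ofReal_mul_I] at h
  rw [hexp, mul_assoc, div_eq_mul_inv (2 * Real.pi), h, Complex.exp_neg (_ / 12 : ℝ)]
  have h1 := Complex.exp_ne_zero (Real.pi * r / 12 : ℝ)
  have h2 : (Real.sqrt r : ℂ) * Real.sqrt r = r := by
    rw [← Complex.ofReal_mul, Real.mul_self_sqrt hr.le]
  rw [← h2]
  field_simp

lemma tendsto_exp_neg_const_div :
    Tendsto (fun r : ℝ => Complex.exp (-(2 * Real.pi / r : ℝ))) (𝓝[>] 0) (𝓝 0) := by
  have h : Tendsto (fun r : ℝ => 2 * Real.pi / r) (𝓝[>] 0) atTop := by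
    simpa [div_eq_mul_inv] using tendsto_inv_nhdsGT_zero.const_mul_atTop Real.two_pi_pos
  have hexp := (Complex.continuous_ofReal.tendsto 0).comp
    (Real.tendsto_exp_neg_atTop_nhds_zero.comp h)
  simpa [Function.comp_def] using hexp

/-- For `z`, `w` on the imaginary axis, the quotient `b · G_b(b z) G_b(b w) / G_b(b (z + w))` tends
to `Γ(z) Γ(w) / (2π Γ(z + w))` as `b² → 0` along the positive imaginary axis. -/
lemma tendsto_br_mul_Gb_mul_Gb_div_Gb {z w : ℂ} (hz : z.re = 0) (hw : w.re = 0)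
    (hz0 : z ≠ 0) (hw0 : w ≠ 0) (hzw0 : z + w ≠ 0) :
    Tendsto (fun r : ℝ => br r * Gb (br r) (z * br r) * Gb (br r) (w * br r) /
        Gb (br r) ((z + w) * br r)) (𝓝[>] 0)
      (𝓝 (1 / (2 * Real.pi) * (Complex.Gamma z * Complex.Gamma w / Complex.Gamma (z + w)))) := by
  have hx : Tendsto (fun r : ℝ => 2 * Real.pi * r) (𝓝[>] 0) (𝓝[>] 0) := by
    refine tendsto_nhdsWithin_iff.2 ⟨?_, ?_⟩
    · have : ContinuousAt (fun r : ℝ => 2 * Real.pi * r) 0 := by fun_prop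
      simpa using this.tendsto.mono_left nhdsWithin_le_nhds
    · filter_upwards [self_mem_nhdsWithin] with r hr
      exact mul_pos Real.two_pi_pos hr
  have hN (c : ℂ) := (tendsto_qPochhammer_mul_self c).comp tendsto_exp_neg_const_div
  have hD (c : ℂ) := (tendsto_one_sub_exp_neg_mul_div c).comp hx
  have hlim := (((((hN (Complex.exp (2 * Real.pi * I * z))).mul
    (hN (Complex.exp (2 * Real.pi * I * w)))).div
    ((hN (Complex.exp (2 * Real.pi * I * (z + w)))).mul (hN 1)) (by simp)).mul
    ((hD (z + w)).div ((hD z).mul (hD w)) (mul_ne_zero hz0 hw0))).mul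
    ((tendsto_tprod_qBeta hz hw).comp hx)).const_mul (1 / (2 * Real.pi : ℂ))
  rw [one_mul, div_one, one_mul, tprod_eq_beta hz.ge hw.ge hz0 hw0 hzw0] at hlim
  refine hlim.congr' ?_
  filter_upwards [self_mem_nhdsWithin,
    (hN (Complex.exp (2 * Real.pi * I * (z + w)))).eventually_ne one_ne_zero,
    (hN 1).eventually_ne one_ne_zero, (hD z).eventually_ne hz0, (hD w).eventually_ne hw0]
    with r hr hp3 hp hz1 hw1
  have hr : 0 < r := hr
  have hx0 : 0 < 2 * Real.pi * r := by positivity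
  have hq : ‖Complex.exp (-(2 * Real.pi * r : ℝ))‖ < 1 := by
    rw [norm_exp_neg_ofReal]
    exact Real.exp_lt_one_iff.2 (by linarith)
  simp only [Pi.div_apply, Function.comp_apply] at hp3 hp hz1 hw1 ⊢
  rw [one_mul] at hp ⊢
  rw [← qPochhammer_beta_eq_tprod hq (one_sub_exp_mul_pow_ne_zero hx0 hz)
    (one_sub_exp_mul_pow_ne_zero hx0 hw), Gb_br_mul hr, Gb_br_mul hr, Gb_br_mul hr,
    qPochhammer_eq_one_sub_mul (Complex.exp (-(_ * z))) hq,
    qPochhammer_eq_one_sub_mul (Complex.exp (-(_ * w))) hq,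
    qPochhammer_eq_one_sub_mul (Complex.exp (-(_ * (z + w)))) hq,
    show Complex.exp (-((2 * Real.pi * r : ℝ) * z)) * Complex.exp (-((2 * Real.pi * r : ℝ) * w)) =
      Complex.exp (-((2 * Real.pi * r : ℝ) * (z + w))) by rw [← Complex.exp_add]; ring_nf]
  have hne (v : ℂ) (hv : v.re = 0) : qPochhammer (Complex.exp (-((2 * Real.pi * r : ℝ) * v)) *
      Complex.exp (-(2 * Real.pi * r : ℝ))) (Complex.exp (-(2 * Real.pi * r : ℝ))) ≠ 0 :=
    qPochhammer_ne_zero hq fun n => by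
      simpa [pow_succ', mul_assoc] using one_sub_exp_mul_pow_ne_zero hx0 hv n
  have hzeta : zetaBar (br r) ≠ 0 := Complex.exp_ne_zero _
  have hmod := br_mul_zetaBar hr
  have hr0 : (r : ℂ) ≠ 0 := Complex.ofReal_ne_zero.2 hr.ne'
  have hpi : (Real.pi : ℂ) ≠ 0 := Complex.ofReal_ne_zero.2 Real.pi_ne_zero
  have hxC : ((2 * Real.pi * r : ℝ) : ℂ) = 2 * Real.pi * r := by push_cast; ring
  have hzn := hne z hz
  have hwn := hne w hw
  have hz2 := (div_ne_zero_iff.1 hz1).1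
  have hw2 := (div_ne_zero_iff.1 hw1).1
  rw [← eq_div_iff hp] at hmod
  rw [hxC]
  rw [hxC] at hz2 hw2 hzn hwn hmod
  generalize qPochhammer (Complex.exp (-(2 * Real.pi / r : ℝ)))
    (Complex.exp (-(2 * Real.pi / r : ℝ))) = P at *
  generalize qPochhammer (Complex.exp (2 * Real.pi * I * (z + w)) * _) _ = N₃ at *
  generalize qPochhammer (Complex.exp (2 * Real.pi * I * z) * _) _ = N₁
  generalize qPochhammer (Complex.exp (2 * Real.pi * I * w) * _) _ = N₂
  generalize qPochhammer (Complex.exp (-(2 * Real.pi * r * (z + w))) * _) _ = R₃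
  generalize qPochhammer (Complex.exp (-(2 * Real.pi * r * z)) * _) _ = R₁ at *
  generalize qPochhammer (Complex.exp (-(2 * Real.pi * r * w)) * _) _ = R₂ at *
  generalize 1 - Complex.exp (-(2 * Real.pi * r * (z + w))) = A₃
  generalize 1 - Complex.exp (-(2 * Real.pi * r * z)) = A₁ at *
  generalize 1 - Complex.exp (-(2 * Real.pi * r * w)) = A₂ at *
  generalize qPochhammer _ _ = S at *
  calc _ = r * S / P * (N₁ * N₂ / N₃ * (A₃ * R₃ / (A₁ * R₁ * (A₂ * R₂)))) := by field_simp
    _ = _ := by rw [← hmod]; field_simp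

/-- Classical limit of the rescaled quantum intertwining kernel
`b²·𝓕⌊bλ, bt; bt₁, bt₂⌋_*` (delta factor removed): for real `λ, t₁, t₂` with
`λ ≠ t₁`, `λ ≠ −t₂`, `t₁ + t₂ ≠ 0`,
`lim_{r→0⁺} b(r) e^{πi b(r)² λ(λ−2t₁)} G_{b(r)}(ib(r)(λ−t₁)) G_{b(r)}(−ib(r)(λ+t₂)) / G_{b(r)}(−ib(r)(t₁+t₂))`
`= (1/2π) Γ(i(λ−t₁)) Γ(−i(λ+t₂)) / Γ(−i(t₁+t₂))`. -/
theorem stmt8 (l t1 t2 : ℝ) (h1 : l ≠ t1) (h2 : l ≠ -t2) (h3 : t1 + t2 ≠ 0) :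
    Tendsto
      (fun r : ℝ =>
        br r * Complex.exp ((Real.pi : ℂ) * Complex.I * (br r) ^ 2 * l * (l - 2 * t1)) *
            Gb (br r) (Complex.I * br r * ((l : ℂ) - t1)) *
            Gb (br r) (-(Complex.I * br r * ((l : ℂ) + t2))) /
          Gb (br r) (-(Complex.I * br r * ((t1 : ℂ) + t2))))
      (𝓝[>] (0 : ℝ))
      (𝓝 (1 / (2 * (Real.pi : ℂ)) * Complex.Gamma (Complex.I * ((l : ℂ) - t1)) *
          Complex.Gamma (-(Complex.I * ((l : ℂ) + t2))) /
          Complex.Gamma (-(Complex.I * ((t1 : ℂ) + t2))))) := by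
  have hfac : Tendsto (fun r : ℝ => Complex.exp ((Real.pi : ℂ) * Complex.I * (br r) ^ 2 * l *
      (l - 2 * t1))) (𝓝[>] 0) (𝓝 1) := by
    have h : ContinuousAt (fun r : ℝ => Complex.exp ((Real.pi : ℂ) * Complex.I * (br r) ^ 2 * l *
        (l - 2 * t1))) 0 := by
      unfold br
      fun_prop
    simpa [br] using h.tendsto.mono_left nhdsWithin_le_nhds
  have h1' : I * ((l : ℂ) - t1) ≠ 0 :=
    mul_ne_zero I_ne_zero (sub_ne_zero.2 (mod_cast h1))
  have h2' : -(I * ((l : ℂ) + t2)) ≠ 0 :=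
    neg_ne_zero.2 (mul_ne_zero I_ne_zero fun h => h2 (by
      rw [eq_neg_iff_add_eq_zero]; exact_mod_cast h))
  have hsum : I * ((l : ℂ) - t1) + -(I * ((l : ℂ) + t2)) = -(I * ((t1 : ℂ) + t2)) := by ring
  have h3' : I * ((l : ℂ) - t1) + -(I * ((l : ℂ) + t2)) ≠ 0 := by
    rw [hsum]
    exact neg_ne_zero.2 (mul_ne_zero I_ne_zero (mod_cast h3))
  have h := hfac.mul (tendsto_br_mul_Gb_mul_Gb_div_Gb (by simp) (by simp) h1' h2' h3')
  rw [hsum] at h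
  convert h using 2 with r
  · rw [show I * br r * ((l : ℂ) - t1) = I * ((l : ℂ) - t1) * br r by ring,
      show -(I * br r * ((l : ℂ) + t2)) = -(I * ((l : ℂ) + t2)) * br r by ring,
      show -(I * br r * ((t1 : ℂ) + t2)) = -(I * ((t1 : ℂ) + t2)) * br r by ring]
    ring
  · ring
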